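/- arXiv:1901.10892 — 4 statements merged into one kernel-verified Lean document; each statement's English description precedes it below -/
import Mathlib

section
/- Generation: Suppose τ ⊢ β ∋ t : B is derivable over an architecture. Then there exist a constructor f of type A₁ → ⋯ → A_m → B, terms t₁ : A₁, …, t_m : A_m (m ≥ 0), and agents α₁, …, αₙ (n ≥ 1) such that t ≡ f t₁ ⋯ t_m, β = αₙ, the agent α₁ possesses f (i.e., τ ⊢ α₁ ∋ f : A₁ → ⋯ → A_m → B), the events α₁ →^{t:B} α₂, …, α_{n−1} →^{t:B} αₙ occur in τ in this order, and moreover τ ⊢ α₁ ∋ t₁ : A₁, …, τ ⊢ α₁ ∋ t_m : A_m. -/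
namespace PrivacyByDesign

/-- Object-level types over a set `σ` of atomic types. -/
inductive Ty (σ : Type) : Type where
  | atom : σ → Ty σ
  | arrow : Ty σ → Ty σ → Ty σ

/-- `Ty.arrows [A₁, …, Aₙ] B` is the type `A₁ → ⋯ → Aₙ → B`. -/
def Ty.arrows {σ : Type} : List (Ty σ) → Ty σ → Ty σ
  | [], B => B
  | A :: As, B => Ty.arrow A (Ty.arrows As B)

/-- Rename the atomic types occurring in a type. -/
def Ty.mapAtom {σ σ' : Type} (f : σ → σ') : Ty σ → Ty σ'
  | .atom a => .atom (f a)
  | .arrow A B => .arrow (Ty.mapAtom f A) (Ty.mapAtom f B)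

/-- Terms over a set `κ` of constructors. -/
inductive Tm (κ : Type) : Type where
  | con : κ → Tm κ
  | app : Tm κ → Tm κ → Tm κ

/-- `Tm.apps f [t₁, …, tₘ]` is the applied term `f t₁ ⋯ tₘ`. -/
def Tm.apps {κ : Type} : Tm κ → List (Tm κ) → Tm κ
  | f, [] => f
  | f, t :: ts => Tm.apps (Tm.app f t) ts

/-- Rename the constructors occurring in a term. -/
def Tm.mapCon {κ κ' : Type} (g : κ → κ') : Tm κ → Tm κ'
  | .con c => .con (g c)
  | .app s t => .app (Tm.mapCon g s) (Tm.mapCon g t)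

/-- An architecture over a type system: each constructor `c : κ` has the type `conTy c`;
`H α` is the set of constructors that agent `α` initially possesses; `M α β` is the set
of atomic types that `α` may send in a message to `β`. -/
structure Arch (Ag σ κ : Type) : Type where
  conTy : κ → Ty σ
  H : Ag → Set κ
  M : Ag → Ag → Set σ

/-- An event `α →^{t : A} β`. -/
structure Event (Ag σ κ : Type) : Type where
  src : Ag
  tm : Tm κ
  ty : Ty σ
  tgt : Ag

/-- A trace is a finite sequence of events. -/
abbrev Trace (Ag σ κ : Type) : Type := List (Event Ag σ κ)

/-- The derivable judgements `τ ⊢ α ∋ t : A`, generated by the rules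
(init), (message₁), (message₂) and (func). -/
inductive Deriv {Ag σ κ : Type} (𝒜 : Arch Ag σ κ) :
    Trace Ag σ κ → Ag → Tm κ → Ty σ → Prop where
  | init {α : Ag} {c : κ} :
      c ∈ 𝒜.H α → Deriv 𝒜 [] α (Tm.con c) (𝒜.conTy c)
  | message₁ {τ : Trace Ag σ κ} {α β : Ag} {t : Tm κ} {A : σ} :
      A ∈ 𝒜.M α β → Deriv 𝒜 τ α t (Ty.atom A) →
      Deriv 𝒜 (τ ++ [⟨α, t, Ty.atom A, β⟩]) β t (Ty.atom A)
  | message₂ {τ : Trace Ag σ κ} {α β γ : Ag} {t s : Tm κ} {A : σ} {C : Ty σ} :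
      A ∈ 𝒜.M α β → Deriv 𝒜 τ α t (Ty.atom A) → Deriv 𝒜 τ γ s C →
      Deriv 𝒜 (τ ++ [⟨α, t, Ty.atom A, β⟩]) γ s C
  | func {τ : Trace Ag σ κ} {α : Ag} {f t : Tm κ} {A B : Ty σ} :
      Deriv 𝒜 τ α f (Ty.arrow A B) → Deriv 𝒜 τ α t A →
      Deriv 𝒜 τ α (Tm.app f t) B

/-- A trace `τ` is valid iff `τ ⊢ α ∋ t : A` is derivable for some `α`, `t`, `A`. -/
def ValidTrace {Ag σ κ : Type} (𝒜 : Arch Ag σ κ) (τ : Trace Ag σ κ) : Prop :=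
  ∃ α t A, Deriv 𝒜 τ α t A

/-- Agent `α` can compute terms of (atomic) type `A` iff it initially possesses a
constructor of type `B₁ → ⋯ → Bₙ → A` (with `n ≥ 0`). -/
def CanCompute {Ag σ κ : Type} (𝒜 : Arch Ag σ κ) (α : Ag) (A : σ) : Prop :=
  ∃ c ∈ 𝒜.H α, ∃ Bs : List (Ty σ), 𝒜.conTy c = Ty.arrows Bs (Ty.atom A)

/-- The chain of events `α₁ →^{t:B} α₂, …, αₙ₋₁ →^{t:B} αₙ` along the list
`αs = [α₁, …, αₙ]`. -/
def chainEvents {Ag σ κ : Type} (t : Tm κ) (B : Ty σ) (αs : List Ag) : Trace Ag σ κ :=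
  List.zipWith (fun a b => Event.mk a t B b) αs αs.tail

/-!
Only terms of atomic type are ever sent, so an agent holding a term of function type has built it
itself. In particular an agent applying `s` to `t` has built `s` from a constructor, hence also
`s t`; and each message carrying a term prolongs the chain of events from the agent that built it.
-/

section Generation

variable {Ag σ κ : Type}

theorem Ty.arrows_append (As Bs : List (Ty σ)) (C : Ty σ) :
    Ty.arrows (As ++ Bs) C = Ty.arrows As (Ty.arrows Bs C) := by
  induction As with
  | nil => rfl
  | cons A As ih => exact congrArg (Ty.arrow A) ih

theorem Tm.apps_append (f : Tm κ) (ts us : List (Tm κ)) :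
    Tm.apps f (ts ++ us) = Tm.apps (Tm.apps f ts) us := by
  induction ts generalizing f with
  | nil => rfl
  | cons t _ ih => exact ih (Tm.app f t)

theorem chainEvents_append_cons (t : Tm κ) (B : Ty σ) (αs : List Ag) (β : Ag) (γs : List Ag) :
    chainEvents t B (αs ++ β :: γs) = chainEvents t B (αs ++ [β]) ++ chainEvents t B (β :: γs) := by
  induction αs with
  | nil => rfl
  | cons α αs ih =>
    cases αs with
    | nil => rfl
    | cons α' αs => exact congrArg (Event.mk α t B α' :: ·) ih

/-- The events of the trace `τ` include a chain that passes `t : B` on from `α` to `β`. The chain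
may be empty, in which case `α = β`. -/
def Relayed (t : Tm κ) (B : Ty σ) (τ : Trace Ag σ κ) (α β : Ag) : Prop :=
  ∃ αs : List Ag, αs.head? = some α ∧ αs.getLast? = some β ∧ (chainEvents t B αs).Sublist τ

namespace Relayed

variable {t : Tm κ} {B : Ty σ} {τ τ' : Trace Ag σ κ} {α β γ : Ag}

theorem refl (t : Tm κ) (B : Ty σ) (τ : Trace Ag σ κ) (α : Ag) : Relayed t B τ α α :=
  ⟨[α], rfl, rfl, List.nil_sublist τ⟩

theorem single (t : Tm κ) (B : Ty σ) (α β : Ag) : Relayed t B [⟨α, t, B, β⟩] α β :=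
  ⟨[α, β], rfl, rfl, List.Sublist.refl _⟩

theorem trans (hαβ : Relayed t B τ α β) (hβγ : Relayed t B τ' β γ) :
    Relayed t B (τ ++ τ') α γ := by
  obtain ⟨αs, hα, hβ, hαs⟩ := hαβ
  obtain ⟨βs, hβ', hγ, hβs⟩ := hβγ
  obtain ⟨αs, rfl⟩ := List.getLast?_eq_some_iff.mp hβ
  obtain ⟨βs, rfl⟩ := List.head?_eq_some_iff.mp hβ'
  refine ⟨αs ++ β :: βs, ?_, ?_, ?_⟩
  · simpa only [List.head?_append, List.head?_cons] using hα
  · rw [List.getLast?_append_of_ne_nil _ (List.cons_ne_nil β βs), hγ]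
  · rw [chainEvents_append_cons]
    exact hαs.append hβs

end Relayed

/-- After the trace `τ`, agent `α` can build `t : B` by applying a constructor it possesses to
arguments it possesses. -/
def Builds (𝒜 : Arch Ag σ κ) (τ : Trace Ag σ κ) (α : Ag) (t : Tm κ) (B : Ty σ) : Prop :=
  ∃ (f : κ) (As : List (Ty σ)) (ts : List (Tm κ)),
    𝒜.conTy f = Ty.arrows As B ∧
    t = Tm.apps (Tm.con f) ts ∧
    Deriv 𝒜 τ α (Tm.con f) (Ty.arrows As B) ∧
    List.Forall₂ (Deriv 𝒜 τ α) ts As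

namespace Builds

variable {𝒜 : Arch Ag σ κ} {τ τ' : Trace Ag σ κ} {α : Ag} {s t : Tm κ} {A B : Ty σ}

theorem con {c : κ} (hc : Deriv 𝒜 τ α (Tm.con c) (𝒜.conTy c)) :
    Builds 𝒜 τ α (Tm.con c) (𝒜.conTy c) :=
  ⟨c, [], [], rfl, rfl, hc, .nil⟩

theorem app (hs : Builds 𝒜 τ α s (Ty.arrow A B)) (ht : Deriv 𝒜 τ α t A) :
    Builds 𝒜 τ α (Tm.app s t) B := by
  obtain ⟨f, As, ts, hf, rfl, hαf, hts⟩ := hs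
  have arrows_concat : Ty.arrows (As ++ [A]) B = Ty.arrows As (Ty.arrow A B) :=
    Ty.arrows_append As [A] B
  exact ⟨f, As ++ [A], ts ++ [t], hf.trans arrows_concat.symm, (Tm.apps_append _ ts [t]).symm,
    arrows_concat ▸ hαf, List.rel_append hts (.cons ht .nil)⟩

theorem mono (hτ : ∀ s C, Deriv 𝒜 τ α s C → Deriv 𝒜 τ' α s C) (ht : Builds 𝒜 τ α t B) :
    Builds 𝒜 τ' α t B := by
  obtain ⟨f, As, ts, hf, rfl, hαf, hts⟩ := ht
  exact ⟨f, As, ts, hf, rfl, hτ _ _ hαf, hts.imp hτ⟩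

end Builds

namespace Deriv

variable {𝒜 : Arch Ag σ κ} {τ : Trace Ag σ κ} {α β : Ag} {t : Tm κ} {A B : Ty σ}

theorem builds_of_arrow (h : Deriv 𝒜 τ α t (Ty.arrow A B)) :
    Builds 𝒜 τ α t (Ty.arrow A B) := by
  generalize hC : Ty.arrow A B = C at h
  induction h generalizing A B with
  | init hc => exact .con (.init hc)
  | message₁ => cases hC
  | message₂ hM ht _ _ ih => exact (ih hC).mono fun _ _ => .message₂ hM ht
  | func _ ht ih _ => exact (ih rfl).app ht

theorem exists_builds_and_relayed (h : Deriv 𝒜 τ β t B) :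
    ∃ α, Builds 𝒜 τ α t B ∧ Relayed t B τ α β := by
  induction h with
  | init hc => exact ⟨_, .con (.init hc), .refl ..⟩
  | message₁ hM ht ih =>
    obtain ⟨α, hα, hrelay⟩ := ih
    exact ⟨α, hα.mono fun _ _ => .message₂ hM ht, hrelay.trans (.single ..)⟩
  | message₂ hM ht _ _ ih =>
    obtain ⟨α, hα, hrelay⟩ := ih
    exact ⟨α, hα.mono fun _ _ => .message₂ hM ht, hrelay.trans (.refl ..)⟩
  | func hs ht => exact ⟨_, hs.builds_of_arrow.app ht, .refl ..⟩

end Deriv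

end Generation

/-- Generation: if `τ ⊢ β ∋ t : B`, then there are a constructor `f` of
type `A₁ → ⋯ → Aₘ → B`, terms `t₁ : A₁, …, tₘ : Aₘ` (`m ≥ 0`) and agents
`α₁, …, αₙ` (`n ≥ 1`) such that `t ≡ f t₁ ⋯ tₘ`, `β = αₙ`, `α₁` possesses `f`,
the events `α₁ →^{t:B} α₂, …, αₙ₋₁ →^{t:B} αₙ` occur in `τ` in this order, and
`τ ⊢ α₁ ∋ t₁ : A₁, …, τ ⊢ α₁ ∋ tₘ : Aₘ`. -/
theorem generation {Ag σ κ : Type} (𝒜 : Arch Ag σ κ) (τ : Trace Ag σ κ)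
    (β : Ag) (t : Tm κ) (B : Ty σ) (h : Deriv 𝒜 τ β t B) :
    ∃ (f : κ) (As : List (Ty σ)) (ts : List (Tm κ)) (αs : List Ag) (α₁ : Ag),
      𝒜.conTy f = Ty.arrows As B ∧
      t = Tm.apps (Tm.con f) ts ∧
      αs.head? = some α₁ ∧
      αs.getLast? = some β ∧
      (chainEvents t B αs).Sublist τ ∧
      Deriv 𝒜 τ α₁ (Tm.con f) (Ty.arrows As B) ∧
      List.Forall₂ (Deriv 𝒜 τ α₁) ts As := by
  obtain ⟨α₁, ⟨f, As, ts, hf, ht, hαf, hts⟩, ⟨αs, hhead, hlast, hchain⟩⟩ :=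
    h.exists_builds_and_relayed
  exact ⟨f, As, ts, αs, α₁, hf, ht, hhead, hlast, hchain, hαf, hts⟩

end PrivacyByDesign
end

section
/- Let T be a type system, Ag a set of agents, and C a finite set of negative constraints of the form α ∋ A ⇒ B over T and Ag. Let B be an architecture over the safe type system T_C with set of agents Ag′ ⊇ Ag. Suppose there is a partition {P_α ⊆ Ag′}_{α ∈ Ag} of Ag′ indexed by Ag such that: (1) α ∈ P_α for all α ∈ Ag; (2) if β may send messages of type A to β′ (A ∈ M_{ββ′}) and β, β′ lie in different sets of the partition, then A has the form C_γ(B) for some γ, B; (3) if β initially possesses π_{αA} then β ∈ P_α; (4) for every constraint α ∋ A ⇒ B in C, if an agent β ∈ P_α initially possesses a constructor whose target type is A, then this constructor is π_{αA}. Then every valid trace through B satisfies every negative constraint in C. -/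
namespace PrivacyByDesign

/-- Atomic types of the safe type system `T_C` (first algorithm): the base atomic types
of `T` together with the certified types `C_α(A)`. -/
inductive SAtom (Ag σ : Type) : Type where
  | base : σ → SAtom Ag σ
  | cert : Ag → σ → SAtom Ag σ

/-- Constructors of the safe type system `T_C` (first algorithm): the base constructors
of `T`, the constructors `m_{αA}^{β₁⋯βₙ}` (with the choice of `β₁, …, βₙ ∈ Ag` given
as a function from indices), and the constructors `π_{αA}`. -/
inductive SCon (Ag σ κ : Type) : Type where
  | base : κ → SCon Ag σ κ
  | m : Ag → σ → (ℕ → Ag) → SCon Ag σ κ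
  | pi : Ag → σ → SCon Ag σ κ

/-- The typing of the constructors of `T_C`, where `Cs α A` lists the types
`B₁, …, Bₙ` such that the constraints of `C` beginning with `α ∋ A` are
`α ∋ A ⇒ B₁, …, α ∋ A ⇒ Bₙ`:
`m_{αA}^{β₁⋯βₙ} : A → C_{β₁}(B₁) → ⋯ → C_{βₙ}(Bₙ) → C_α(A)` and
`π_{αA} : C_α(A) → A`. -/
def safeConTy {Ag σ κ : Type} (conTy : κ → Ty σ) (Cs : Ag → σ → List σ) :
    SCon Ag σ κ → Ty (SAtom Ag σ)
  | .base c => Ty.mapAtom SAtom.base (conTy c)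
  | .m α A βf =>
      Ty.arrows
        (Ty.atom (SAtom.base A) ::
          List.mapIdx (fun i B => Ty.atom (SAtom.cert (βf i) B)) (Cs α A))
        (Ty.atom (SAtom.cert α A))
  | .pi α A => Ty.arrow (Ty.atom (SAtom.cert α A)) (Ty.atom (SAtom.base A))

/-! A term of atomic type that reaches an agent was originally built from some constructor all of
whose arguments are derivable. If no base type can be sent into `P α`, a term of type `A` held there
was built inside `P α`, hence by `π_{αA}`, so `C_α(A)` is derivable. Only `m_{αA}` produces
`C_α(A)`, and it consumes some `C_β(B)` for each constraint `α ∋ A ⇒ B`; by the same reasoning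
`C_β(B)` was produced by `m_{βB}`, which consumes `B`. -/

namespace Ty

variable {σ σ' : Type}

/-- The atomic type `A` in `B₁ → ⋯ → Bₙ → A`. -/
def target : Ty σ → σ
  | .atom a => a
  | .arrow _ B => B.target

/-- The argument types `[B₁, …, Bₙ]` of `B₁ → ⋯ → Bₙ → A`, where `A` is atomic. -/
def args : Ty σ → List (Ty σ)
  | .atom _ => []
  | .arrow A B => A :: B.args

theorem target_arrows (As : List (Ty σ)) (B : Ty σ) : (arrows As B).target = B.target := by
  induction As with
  | nil => rfl
  | cons _ _ ih => exact ih

theorem args_arrows (As : List (Ty σ)) (B : Ty σ) : (arrows As B).args = As ++ B.args := by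
  induction As with
  | nil => rfl
  | cons A As ih => exact congrArg (A :: ·) ih

theorem arrows_append_s4 (As Bs : List (Ty σ)) (C : Ty σ) :
    arrows (As ++ Bs) C = arrows As (arrows Bs C) := by
  induction As with
  | nil => rfl
  | cons A As ih => exact congrArg (arrow A) ih

theorem target_mapAtom (f : σ → σ') (A : Ty σ) : (A.mapAtom f).target = f A.target := by
  induction A with
  | atom _ => rfl
  | arrow _ _ _ ih => exact ih

theorem target_eq_of_eq_arrows_atom {A : Ty σ} {Bs : List (Ty σ)} {a : σ}
    (h : A = arrows Bs (atom a)) : A.target = a := by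
  rw [h, target_arrows, target]

theorem args_eq_of_eq_arrows_atom {A : Ty σ} {Bs : List (Ty σ)} {a : σ}
    (h : A = arrows Bs (atom a)) : A.args = Bs := by
  rw [h, args_arrows, args, List.append_nil]

end Ty

section Architecture

variable {Ag σ κ : Type} {𝒜 : Arch Ag σ κ} {τ : Trace Ag σ κ} {α β : Ag} {A B : Ty σ}
  {S : Set Ag}

/-- The judgement `τ ⊢ A`: some agent possesses a term of type `A` after the trace `τ`. -/
def Derivable (𝒜 : Arch Ag σ κ) (τ : Trace Ag σ κ) (A : Ty σ) : Prop :=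
  ∃ α t, Deriv 𝒜 τ α t A

/-- Agent `α` initially possesses a constructor of type `B₁ → ⋯ → Bₙ → A` with `τ ⊢ Bᵢ` for
every `i`. The type `A` need not be atomic, so that partial applications are covered. -/
def Originates (𝒜 : Arch Ag σ κ) (τ : Trace Ag σ κ) (α : Ag) (A : Ty σ) : Prop :=
  ∃ c ∈ 𝒜.H α, ∃ Bs, 𝒜.conTy c = Ty.arrows Bs A ∧ ∀ B ∈ Bs, Derivable 𝒜 τ B

/-- No message of type `A` can enter the set of agents `S` from outside. This holds trivially
for function types `A`, since only terms of atomic type are ever sent. -/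
def SealedFor (𝒜 : Arch Ag σ κ) (S : Set Ag) (A : Ty σ) : Prop :=
  ∀ a, A = Ty.atom a → ∀ β ∉ S, ∀ β' ∈ S, a ∉ 𝒜.M β β'

theorem sealedFor_univ (𝒜 : Arch Ag σ κ) (A : Ty σ) : SealedFor 𝒜 Set.univ A :=
  fun _ _ β hβ => absurd (Set.mem_univ β) hβ

theorem sealedFor_arrow (𝒜 : Arch Ag σ κ) (S : Set Ag) (A B : Ty σ) :
    SealedFor 𝒜 S (Ty.arrow A B) :=
  nofun

theorem Derivable.message {a : σ} {t : Tm κ} (h : Derivable 𝒜 τ B) (ha : a ∈ 𝒜.M α β)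
    (ht : Deriv 𝒜 τ α t (Ty.atom a)) : Derivable 𝒜 (τ ++ [⟨α, t, Ty.atom a, β⟩]) B :=
  let ⟨γ, s, hs⟩ := h
  ⟨γ, s, .message₂ ha ht hs⟩

theorem Originates.message {a : σ} {t : Tm κ} {γ : Ag} (h : Originates 𝒜 τ γ B)
    (ha : a ∈ 𝒜.M α β) (ht : Deriv 𝒜 τ α t (Ty.atom a)) :
    Originates 𝒜 (τ ++ [⟨α, t, Ty.atom a, β⟩]) γ B :=
  let ⟨c, hc, Bs, hcB, hBs⟩ := h
  ⟨c, hc, Bs, hcB, fun X hX => (hBs X hX).message ha ht⟩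

theorem Originates.app (h : Originates 𝒜 τ α (Ty.arrow A B)) (hA : Derivable 𝒜 τ A) :
    Originates 𝒜 τ α B := by
  obtain ⟨c, hc, Bs, hcB, hBs⟩ := h
  refine ⟨c, hc, Bs ++ [A], by rw [hcB, Ty.arrows_append_s4]; rfl, fun X hX => ?_⟩
  rcases List.mem_append.1 hX with hX | hX
  · exact hBs X hX
  · rwa [List.mem_singleton.1 hX]

theorem Deriv.exists_originates_of_sealedFor {t : Tm κ} (h : Deriv 𝒜 τ β t A)
    (hS : SealedFor 𝒜 S A) (hβ : β ∈ S) : ∃ β' ∈ S, Originates 𝒜 τ β' A := by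
  induction h with
  | init hc => exact ⟨_, hβ, _, hc, [], rfl, nofun⟩
  | message₁ ha ht ih =>
    have hsrc := by_contra fun hα => hS _ rfl _ hα _ hβ ha
    obtain ⟨β', hβ', h⟩ := ih hS hsrc
    exact ⟨β', hβ', h.message ha ht⟩
  | message₂ ha ht _ _ ih =>
    obtain ⟨β', hβ', h⟩ := ih hS hβ
    exact ⟨β', hβ', h.message ha ht⟩
  | func _ ht ih _ =>
    obtain ⟨β', hβ', h⟩ := ih (sealedFor_arrow 𝒜 S _ _) hβ
    exact ⟨β', hβ', h.app ⟨_, _, ht⟩⟩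

theorem Derivable.exists_originates (h : Derivable 𝒜 τ A) : ∃ β, Originates 𝒜 τ β A := by
  obtain ⟨_, _, h⟩ := h
  obtain ⟨β, -, hβ⟩ := h.exists_originates_of_sealedFor (sealedFor_univ 𝒜 A) (Set.mem_univ _)
  exact ⟨β, hβ⟩

end Architecture

section SafeTypeSystem

variable {Ag σ κ Ag' : Type} {conTy : κ → Ty σ} {Cs : Ag → σ → List σ}
  {ℬ : Arch Ag' (SAtom Ag σ) (SCon Ag σ κ)} {τ : Trace Ag' (SAtom Ag σ) (SCon Ag σ κ)}
  {α : Ag} {A B : σ}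

theorem args_safeConTy_m (conTy : κ → Ty σ) (Cs : Ag → σ → List σ) (α : Ag) (A : σ)
    (βf : ℕ → Ag) :
    (safeConTy conTy Cs (.m α A βf)).args =
      Ty.atom (SAtom.base A) :: (Cs α A).mapIdx fun i B => Ty.atom (SAtom.cert (βf i) B) :=
  Ty.args_eq_of_eq_arrows_atom rfl

theorem exists_eq_m_of_target_safeConTy_eq_cert {c : SCon Ag σ κ}
    (h : (safeConTy conTy Cs c).target = SAtom.cert α A) : ∃ βf, c = .m α A βf := by
  cases c with
  | base _ => simp only [safeConTy, Ty.target_mapAtom, reduceCtorEq] at h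
  | m α' A' βf =>
    simp only [safeConTy, Ty.target_arrows, Ty.target, SAtom.cert.injEq] at h
    exact ⟨βf, by rw [h.1, h.2]⟩
  | pi _ _ => simp only [safeConTy, Ty.target, reduceCtorEq] at h

theorem Derivable.exists_args_m (hty : ℬ.conTy = safeConTy conTy Cs)
    (h : Derivable ℬ τ (Ty.atom (SAtom.cert α A))) :
    ∃ βf, ∀ X ∈ (safeConTy conTy Cs (.m α A βf)).args, Derivable ℬ τ X := by
  obtain ⟨_, c, -, Bs, hcB, hBs⟩ := h.exists_originates
  rw [hty] at hcB
  obtain ⟨βf, rfl⟩ := exists_eq_m_of_target_safeConTy_eq_cert (Ty.target_eq_of_eq_arrows_atom hcB)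
  exact ⟨βf, Ty.args_eq_of_eq_arrows_atom hcB ▸ hBs⟩

theorem Derivable.base_of_cert (hty : ℬ.conTy = safeConTy conTy Cs)
    (h : Derivable ℬ τ (Ty.atom (SAtom.cert α A))) : Derivable ℬ τ (Ty.atom (SAtom.base A)) := by
  obtain ⟨βf, hargs⟩ := h.exists_args_m hty
  rw [args_safeConTy_m] at hargs
  exact hargs _ List.mem_cons_self

theorem Derivable.exists_cert_of_cert (hty : ℬ.conTy = safeConTy conTy Cs)
    (h : Derivable ℬ τ (Ty.atom (SAtom.cert α A))) (hB : B ∈ Cs α A) :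
    ∃ β, Derivable ℬ τ (Ty.atom (SAtom.cert β B)) := by
  obtain ⟨βf, hargs⟩ := h.exists_args_m hty
  rw [args_safeConTy_m] at hargs
  obtain ⟨i, hi, rfl⟩ := List.mem_iff_getElem.1 hB
  exact ⟨βf i, hargs _ (List.mem_cons_of_mem _ (List.mem_mapIdx.2 ⟨i, hi, rfl⟩))⟩

theorem Deriv.derivable_cert_of_sealedFor {S : Set Ag'} {β : Ag'} {t : Tm (SCon Ag σ κ)}
    (h : Deriv ℬ τ β t (Ty.atom (SAtom.base A))) (hty : ℬ.conTy = safeConTy conTy Cs)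
    (hS : SealedFor ℬ S (Ty.atom (SAtom.base A))) (hβ : β ∈ S)
    (hpi : ∀ β ∈ S, ∀ c ∈ ℬ.H β,
      (∃ Ts, ℬ.conTy c = Ty.arrows Ts (Ty.atom (SAtom.base A))) → c = SCon.pi α A) :
    Derivable ℬ τ (Ty.atom (SAtom.cert α A)) := by
  obtain ⟨β', hβ', c, hc, Bs, hcB, hBs⟩ := h.exists_originates_of_sealedFor hS hβ
  obtain rfl := hpi β' hβ' c hc ⟨Bs, hcB⟩
  rw [hty] at hcB
  have hargs : [Ty.atom (SAtom.cert α A)] = Bs := Ty.args_eq_of_eq_arrows_atom hcB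
  exact hBs _ (hargs ▸ List.mem_cons_self)

theorem sealedFor_base_of_sends_cert {P : Ag → Set Ag'}
    (hP : ∀ x α β, x ∈ P α → x ∈ P β → α = β)
    (hcert : ∀ β β' T, T ∈ ℬ.M β β' → (¬ ∃ α, β ∈ P α ∧ β' ∈ P α) → ∃ γ B, T = SAtom.cert γ B)
    (α : Ag) (A : σ) : SealedFor ℬ (P α) (Ty.atom (SAtom.base A)) := by
  rintro _ ⟨⟩ β hβ β' hβ' hM
  have hdiff : ¬ ∃ δ, β ∈ P δ ∧ β' ∈ P δ := by
    rintro ⟨δ, hδ, hδ'⟩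
    exact hβ (hP β' δ α hδ' hβ' ▸ hδ)
  obtain ⟨_, _, h⟩ := hcert β β' _ hM hdiff
  cases h

theorem safe_partition_neg_constraints_general {S : Set Ag'} {β : Ag'} {t : Tm (SCon Ag σ κ)}
    (hty : ℬ.conTy = safeConTy conTy Cs)
    (hS : SealedFor ℬ S (Ty.atom (SAtom.base A)))
    (hpi : ∀ β ∈ S, ∀ c ∈ ℬ.H β,
      (∃ Ts, ℬ.conTy c = Ty.arrows Ts (Ty.atom (SAtom.base A))) → c = SCon.pi α A)
    (hB : B ∈ Cs α A) (hβ : β ∈ S) (h : Deriv ℬ τ β t (Ty.atom (SAtom.base A))) :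
    Derivable ℬ τ (Ty.atom (SAtom.base B)) := by
  have hA : Derivable ℬ τ (Ty.atom (SAtom.cert α A)) :=
    h.derivable_cert_of_sealedFor hty hS hβ hpi
  obtain ⟨γ, hγ⟩ := hA.exists_cert_of_cert hty hB
  exact hγ.base_of_cert hty

end SafeTypeSystem

/-- Theorem 1 of the paper: let `C` be a finite set of negative
constraints `α ∋ A ⇒ B` (encoded by `Cs`, where `Cs α A` lists the `B` with
`α ∋ A ⇒ B` in `C`) and let `ℬ` be an architecture over `T_C` whose agents `Ag'`
include `Ag` (via the injection `ι`).  If there is a partition `{P_α}_{α ∈ Ag}` of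
`Ag'` such that (1) `α ∈ P_α`; (2) any type sent between agents in different sets of
the partition has the form `C_γ(B)`; (3) if `β` initially possesses `π_{αA}` then
`β ∈ P_α`; (4) for every constraint `α ∋ A ⇒ B` in `C`, any constructor with target
type `A` initially possessed by an agent of `P_α` is `π_{αA}`; then every valid trace
through `ℬ` satisfies every negative constraint in `C`. -/
theorem safe_partition_neg_constraints {Ag σ κ Ag' : Type}
    (conTy : κ → Ty σ) (Cs : Ag → σ → List σ)
    (hfin : {p : Ag × σ | Cs p.1 p.2 ≠ []}.Finite)
    (ι : Ag → Ag') (hι : Function.Injective ι)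
    (ℬ : Arch Ag' (SAtom Ag σ) (SCon Ag σ κ))
    (hty : ℬ.conTy = safeConTy conTy Cs)
    (P : Ag → Set Ag')
    (hpart : ∀ x : Ag', ∃! α : Ag, x ∈ P α)
    (h1 : ∀ α : Ag, ι α ∈ P α)
    (h2 : ∀ (β β' : Ag') (T : SAtom Ag σ), T ∈ ℬ.M β β' →
      (¬ ∃ α : Ag, β ∈ P α ∧ β' ∈ P α) → ∃ γ B, T = SAtom.cert γ B)
    (h3 : ∀ (β : Ag') (α : Ag) (A : σ), SCon.pi α A ∈ ℬ.H β → β ∈ P α)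
    (h4 : ∀ (α : Ag) (A B : σ), B ∈ Cs α A → ∀ β ∈ P α, ∀ c ∈ ℬ.H β,
      (∃ Ts : List (Ty (SAtom Ag σ)), ℬ.conTy c = Ty.arrows Ts (Ty.atom (SAtom.base A))) →
      c = SCon.pi α A) :
    ∀ τ : Trace Ag' (SAtom Ag σ) (SCon Ag σ κ), ValidTrace ℬ τ →
      ∀ (α : Ag) (A B : σ), B ∈ Cs α A →
        ∀ τ₁, τ₁ <+: τ →
          (∃ t, Deriv ℬ τ₁ (ι α) t (Ty.atom (SAtom.base A))) →
          ∃ β s, Deriv ℬ τ₁ β s (Ty.atom (SAtom.base B)) := by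
  rintro τ - α A B hB τ₁ - ⟨t, ht⟩
  have hS := sealedFor_base_of_sends_cert (fun x _ _ => (hpart x).unique) h2 α A
  exact safe_partition_neg_constraints_general hty hS (h4 α A B hB) hB (h1 α) ht

end PrivacyByDesign
end

section
/- Let A be an architecture and C a finite set of constraints such that for every negative constraint α ∋ A ⇒ B in C, the agent α cannot compute terms of type A. Then every valid trace through the architecture Safe(A, C) produced by the first algorithm satisfies every negative constraint in C. -/
namespace PrivacyByDesign

/-- The first algorithm's `Safe(𝒜, C)`.  Its agents are those of `𝒜` (`Sum.inl α`)
together with an interface `I_α` (`Sum.inr α`) for each agent `α` of `𝒜`; its type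
system is `T_C`; each agent of `𝒜` keeps its constructors; every interface possesses
all the constructors `m_{αA}^{β₁⋯βₙ}`, and `I_α` possesses `π_{αA}`; `α` and `I_α`
may send any atomic type of `T` to each other; any two interfaces may send messages
of type `C_α(A)` to each other. -/
def safeArch1 {Ag σ κ : Type} (𝒜 : Arch Ag σ κ) (Cs : Ag → σ → List σ) :
    Arch (Ag ⊕ Ag) (SAtom Ag σ) (SCon Ag σ κ) where
  conTy := safeConTy 𝒜.conTy Cs
  H := fun x =>
    match x with
    | .inl α => {c | ∃ c₀ ∈ 𝒜.H α, c = SCon.base c₀}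
    | .inr γ => {c | (∃ α A βf, c = SCon.m α A βf) ∨ (∃ A, c = SCon.pi γ A)}
  M := fun x y =>
    match x, y with
    | .inl α, .inr γ => {T | α = γ ∧ ∃ A, T = SAtom.base A}
    | .inr γ, .inl α => {T | α = γ ∧ ∃ A, T = SAtom.base A}
    | .inr _, .inr _ => {T | ∃ α A, T = SAtom.cert α A}
    | .inl _, .inl _ => ∅

/-!
Read each type as a proposition, with `→` as implication and with a separate valuation of the
atomic types for each agent. A judgement `τ ⊢ γ ∋ t : T` then makes `T` true at `γ`, provided that
the types of the constructors of each agent are true at that agent and that messages preserve truth.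

For `Safe(𝒜, C)`, let `W` be the set of those atomic types of `𝒜` of which some agent or interface
has a term after `τ`. At the agent `α`, read `A` as "if `α` cannot compute terms of type `A`, then
`B ∈ W` for every constraint `α ∋ A ⇒ B`". At an interface, read `A` and `C_α(A)` as the same claim
about the agent of that interface, respectively about `α`, together with `A ∈ W`. The constructors
of `α` are then true vacuously, since `α` can compute the types they produce, and the constructors
`m_{αA}` are true because their arguments of types `C_{βᵢ}(Bᵢ)` put each `Bᵢ` into `W`.
-/

/-- The Curry–Howard reading of a type as a proposition, under a valuation `v` of the atomic
types. -/
def Ty.eval {σ : Type} (v : σ → Prop) : Ty σ → Prop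
  | .atom a => v a
  | .arrow S T => S.eval v → T.eval v

namespace Ty

variable {σ σ' : Type}

theorem eval_mapAtom (f : σ → σ') (v : σ' → Prop) (T : Ty σ) :
    (T.mapAtom f).eval v ↔ T.eval (v ∘ f) := by
  induction T with
  | atom a => rfl
  | arrow S T ihS ihT => exact imp_congr ihS ihT

theorem eval_arrows (v : σ → Prop) (Ss : List (Ty σ)) (T : Ty σ) :
    (arrows Ss T).eval v ↔ ((∀ S ∈ Ss, S.eval v) → T.eval v) := by
  induction Ss with
  | nil => simp only [arrows, List.not_mem_nil, false_imp_iff, implies_true, true_imp_iff]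
  | cons S Ss ih => simp only [arrows, eval, ih, List.forall_mem_cons, and_imp]

theorem exists_eq_arrows_atom (T : Ty σ) : ∃ Ss a, T = arrows Ss (atom a) := by
  induction T with
  | atom a => exact ⟨[], a, rfl⟩
  | arrow S T _ ihT =>
    obtain ⟨Ss, a, rfl⟩ := ihT
    exact ⟨S :: Ss, a, rfl⟩

end Ty

theorem Deriv.eval {Ag σ κ : Type} {𝒜 : Arch Ag σ κ} {v : Ag → σ → Prop}
    (hH : ∀ α, ∀ c ∈ 𝒜.H α, (𝒜.conTy c).eval (v α))
    {τ : Trace Ag σ κ} {γ : Ag} {t : Tm κ} {T : Ty σ} (h : Deriv 𝒜 τ γ t T)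
    (hM : ∀ α β, ∀ A ∈ 𝒜.M α β, (∃ s, Deriv 𝒜 τ α s (.atom A)) → v α A → v β A) :
    T.eval (v γ) := by
  -- A term stays available along the trace, so `hM` for `τ` implies `hM` for its prefixes.
  induction h with
  | init hc => exact hH _ _ hc
  | message₁ hA hs ih =>
    exact hM _ _ _ hA ⟨_, hs.message₂ hA hs⟩
      (ih fun α β A hA' ⟨s, hs'⟩ => hM α β A hA' ⟨s, hs.message₂ hA hs'⟩)
  | message₂ hA hs _ _ ih =>
    exact ih fun α β A hA' ⟨s, hs'⟩ => hM α β A hA' ⟨s, hs.message₂ hA hs'⟩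
  | func _ _ ihf iht => exact ihf hM (iht hM)

section SafeArchitecture

variable {Ag σ κ : Type} (𝒜 : Arch Ag σ κ) (Cs : Ag → σ → List σ) (W : Set σ)

/-- Unless `α` can compute terms of type `A` in `𝒜`, the set `W` of types contains every `B` with a
constraint `α ∋ A ⇒ B`. -/
def Complies (α : Ag) (A : σ) : Prop :=
  ¬ CanCompute 𝒜 α A → ∀ B ∈ Cs α A, B ∈ W

/-- What it means for an agent or interface of `Safe(𝒜, C)` to have a term of a given atomic type,
when `W` is the set of types of `𝒜` of which some agent or interface has a term. The value at the
type `C_α(A)` and an agent that is not an interface is arbitrary, as such an agent never has a term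
of that type. -/
def safeVal : Ag ⊕ Ag → SAtom Ag σ → Prop
  | .inl α, .base A => Complies 𝒜 Cs W α A
  | .inl _, .cert _ _ => True
  | .inr γ, .base A => A ∈ W ∧ Complies 𝒜 Cs W γ A
  | .inr _, .cert α A => A ∈ W ∧ Complies 𝒜 Cs W α A

variable {𝒜 Cs W}

theorem eval_safeConTy_base {α : Ag} {c : κ} (hc : c ∈ 𝒜.H α) :
    (safeConTy 𝒜.conTy Cs (.base c)).eval (safeVal 𝒜 Cs W (.inl α)) := by
  obtain ⟨Ss, A, hcA⟩ := (𝒜.conTy c).exists_eq_arrows_atom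
  have hA : CanCompute 𝒜 α A := ⟨c, hc, Ss, hcA⟩
  rw [safeConTy, Ty.eval_mapAtom, hcA, Ty.eval_arrows]
  exact fun _ hNot => absurd hA hNot

theorem eval_safeConTy_m (γ α : Ag) (A : σ) (βf : ℕ → Ag) :
    (safeConTy 𝒜.conTy Cs (.m α A βf)).eval (safeVal 𝒜 Cs W (.inr γ)) := by
  rw [safeConTy, Ty.eval_arrows, List.forall_mem_cons]
  rintro ⟨hA, hCert⟩
  refine ⟨hA.1, fun _ B hB => ?_⟩
  obtain ⟨i, hi, rfl⟩ := List.mem_iff_getElem.1 hB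
  exact (hCert _ (List.mem_mapIdx.2 ⟨i, hi, rfl⟩)).1

theorem eval_conTy_of_mem_H {x : Ag ⊕ Ag} {c : SCon Ag σ κ} (hc : c ∈ (safeArch1 𝒜 Cs).H x) :
    ((safeArch1 𝒜 Cs).conTy c).eval (safeVal 𝒜 Cs W x) := by
  rcases x with α | γ
  · obtain ⟨c, hc, rfl⟩ := hc
    exact eval_safeConTy_base hc
  · rcases hc with ⟨α, A, βf, rfl⟩ | ⟨A, rfl⟩
    · exact eval_safeConTy_m γ α A βf
    · exact id

theorem safeVal_of_mem_M {x y : Ag ⊕ Ag} {T : SAtom Ag σ} (hT : T ∈ (safeArch1 𝒜 Cs).M x y)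
    (hW : ∀ A, T = .base A → A ∈ W) (hx : safeVal 𝒜 Cs W x T) : safeVal 𝒜 Cs W y T := by
  rcases x with α | γ <;> rcases y with α' | γ'
  · exact hT.elim
  · obtain ⟨rfl, A, rfl⟩ := hT
    exact ⟨hW A rfl, hx⟩
  · obtain ⟨rfl, A, rfl⟩ := hT
    exact hx.2
  · obtain ⟨α, A, rfl⟩ := hT
    exact hx

end SafeArchitecture

theorem safeArch1_neg_constraints_general {Ag σ κ : Type} {𝒜 : Arch Ag σ κ}
    {Cs : Ag → σ → List σ} {α : Ag} {A B : σ} (hB : B ∈ Cs α A) (hA : ¬ CanCompute 𝒜 α A)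
    {τ : Trace (Ag ⊕ Ag) (SAtom Ag σ) (SCon Ag σ κ)} {t : Tm (SCon Ag σ κ)}
    (ht : Deriv (safeArch1 𝒜 Cs) τ (.inl α) t (.atom (.base A))) :
    ∃ β s, Deriv (safeArch1 𝒜 Cs) τ β s (.atom (.base B)) := by
  let W : Set σ := {A | ∃ β s, Deriv (safeArch1 𝒜 Cs) τ β s (.atom (.base A))}
  have hAW : Complies 𝒜 Cs W α A :=
    ht.eval (v := safeVal 𝒜 Cs W) (fun _ _ hc => eval_conTy_of_mem_H hc)
      fun x _ _ hT ⟨s, hs⟩ => safeVal_of_mem_M hT fun _ hTA => ⟨x, s, hTA ▸ hs⟩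
  exact hAW hA B hB

/-- if for every negative constraint `α ∋ A ⇒ B` in the finite set `C`
the agent `α` cannot compute terms of type `A` in `𝒜`, then every valid trace through
the first algorithm's `Safe(𝒜, C)` satisfies every negative constraint in `C`. -/
theorem safeArch1_neg_constraints {Ag σ κ : Type}
    (𝒜 : Arch Ag σ κ) (Cs : Ag → σ → List σ)
    (hfin : {p : Ag × σ | Cs p.1 p.2 ≠ []}.Finite)
    (hcc : ∀ (α : Ag) (A B : σ), B ∈ Cs α A → ¬ CanCompute 𝒜 α A) :
    ∀ τ : Trace (Ag ⊕ Ag) (SAtom Ag σ) (SCon Ag σ κ),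
      ValidTrace (safeArch1 𝒜 Cs) τ →
      ∀ (α : Ag) (A B : σ), B ∈ Cs α A →
        ∀ τ₁, τ₁ <+: τ →
          (∃ t, Deriv (safeArch1 𝒜 Cs) τ₁ (Sum.inl α) t (Ty.atom (SAtom.base A))) →
          ∃ β s, Deriv (safeArch1 𝒜 Cs) τ₁ β s (Ty.atom (SAtom.base B)) := by
  intro _ _ α A B hB _ _ ⟨_, ht⟩
  exact safeArch1_neg_constraints_general hB (hcc α A B hB) ht

end PrivacyByDesign
end

section
/- In the first algorithm's architecture Safe(A, C), the family of sets {P_α}_{α ∈ Ag} defined by P_α = {α, I_α} is a partition of the agents of Safe(A, C) satisfying: (1) α ∈ P_α for all α ∈ Ag; (2) if an agent β may send messages of type A to an agent β′ and β, β′ lie in different sets of the partition, then A has the form C_γ(B) for some γ, B; (3) if β initially possesses π_{αA} then β ∈ P_α; (4) for every constraint α ∋ A ⇒ B in C with α unable to compute terms of type A in A, if an agent β ∈ P_α possesses a constructor with target type A, then this constructor is π_{αA}. -/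
namespace PrivacyByDesign

/-! A constructor builds terms of an atomic type exactly when the last atom of its type is that
atomic type, and the last atom commutes with renaming. So a base constructor kept by `α` reaches
`A` in `Safe(𝒜, C)` only if it already did so in `𝒜`, while the constructors `m` reach only
certified types; what remains is `π_{αA}`, which only `I_α` possesses. -/

/-- The target of a type: the atom `A` such that the type is `B₁ → ⋯ → Bₙ → A`. It replaces the
existential over argument lists in `CanCompute` by an equation. -/
def Ty.target_s14 {σ : Type} : Ty σ → σ
  | .atom a => a
  | .arrow _ B => B.target_s14

section Target

variable {σ σ' : Type}

theorem Ty.target_arrows_s14 (Ts : List (Ty σ)) (B : Ty σ) :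
    (Ty.arrows Ts B).target_s14 = B.target_s14 := by
  induction Ts with
  | nil => rfl
  | cons _ _ ih => exact ih

theorem Ty.target_mapAtom_s14 (f : σ → σ') (T : Ty σ) :
    (Ty.mapAtom f T).target_s14 = f T.target_s14 := by
  induction T with
  | atom _ => rfl
  | arrow _ _ _ ih => exact ih

theorem Ty.exists_eq_arrows_target (T : Ty σ) :
    ∃ Ts : List (Ty σ), T = Ty.arrows Ts (.atom T.target_s14) := by
  induction T with
  | atom _ => exact ⟨[], rfl⟩
  | arrow A _ _ ih =>
    obtain ⟨Ts, hTs⟩ := ih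
    exact ⟨A :: Ts, congrArg (Ty.arrow A) hTs⟩

theorem Ty.exists_eq_arrows_iff {T : Ty σ} {a : σ} :
    (∃ Ts : List (Ty σ), T = Ty.arrows Ts (.atom a)) ↔ T.target_s14 = a := by
  constructor
  · rintro ⟨Ts, rfl⟩
    exact Ty.target_arrows_s14 Ts (.atom a)
  · rintro rfl
    exact T.exists_eq_arrows_target

end Target

theorem canCompute_iff_exists_target {Ag σ κ : Type} {𝒜 : Arch Ag σ κ} {α : Ag} {A : σ} :
    CanCompute 𝒜 α A ↔ ∃ c ∈ 𝒜.H α, (𝒜.conTy c).target_s14 = A := by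
  simp only [CanCompute, Ty.exists_eq_arrows_iff]

/-- The set `P_α = {α, I_α}` of the partition: an agent together with its interface. -/
def cell {Ag : Type} (α : Ag) : Set (Ag ⊕ Ag) :=
  {Sum.inl α, Sum.inr α}

section Cell

variable {Ag : Type} {α β : Ag}

theorem inl_mem_cell_iff : Sum.inl β ∈ cell α ↔ β = α := by
  simp [cell]

theorem inr_mem_cell_iff : Sum.inr β ∈ cell α ↔ β = α := by
  simp [cell]

theorem existsUnique_mem_cell (x : Ag ⊕ Ag) : ∃! α : Ag, x ∈ cell α := by
  cases x <;> simp only [inl_mem_cell_iff, inr_mem_cell_iff, existsUnique_eq']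

end Cell

section SafeArch1

variable {Ag σ κ : Type} {𝒜 : Arch Ag σ κ} {Cs : Ag → σ → List σ}

theorem same_cell_or_eq_cert_of_mem_M {β β' : Ag ⊕ Ag} {T : SAtom Ag σ}
    (hT : T ∈ (safeArch1 𝒜 Cs).M β β') :
    (∃ α : Ag, β ∈ cell α ∧ β' ∈ cell α) ∨ ∃ γ B, T = SAtom.cert γ B := by
  rcases β with β | β <;> rcases β' with β' | β'
  · exact hT.elim
  · exact .inl ⟨β, inl_mem_cell_iff.2 rfl, inr_mem_cell_iff.2 hT.1.symm⟩
  · exact .inl ⟨β, inr_mem_cell_iff.2 rfl, inl_mem_cell_iff.2 hT.1⟩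
  · exact .inr hT

theorem mem_cell_of_pi_mem_H {β : Ag ⊕ Ag} {α : Ag} {A : σ}
    (h : SCon.pi α A ∈ (safeArch1 𝒜 Cs).H β) : β ∈ cell α := by
  rcases β with β | γ
  · obtain ⟨_, _, ⟨⟩⟩ := h
  · obtain ⟨_, _, _, ⟨⟩⟩ | ⟨_, ⟨⟩⟩ := h
    exact inr_mem_cell_iff.2 rfl

theorem canCompute_safeArch1_inl_iff {α : Ag} {A : σ} :
    CanCompute (safeArch1 𝒜 Cs) (Sum.inl α) (SAtom.base A) ↔ CanCompute 𝒜 α A := by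
  have target_base (c : κ) :
      ((safeArch1 𝒜 Cs).conTy (.base c)).target_s14 = .base A ↔ (𝒜.conTy c).target_s14 = A := by
    simp only [safeArch1, safeConTy, Ty.target_mapAtom_s14, SAtom.base.injEq]
  simp only [canCompute_iff_exists_target]
  constructor
  · rintro ⟨_, ⟨c, hc, rfl⟩, hA⟩
    exact ⟨c, hc, (target_base c).1 hA⟩
  · rintro ⟨c, hc, hA⟩
    exact ⟨.base c, ⟨c, hc, rfl⟩, (target_base c).2 hA⟩

theorem eq_pi_of_mem_H_inr {α : Ag} {A : σ} {c : SCon Ag σ κ}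
    (hc : c ∈ (safeArch1 𝒜 Cs).H (Sum.inr α))
    (hA : ((safeArch1 𝒜 Cs).conTy c).target_s14 = SAtom.base A) : c = SCon.pi α A := by
  rcases hc with ⟨α', A', βf, rfl⟩ | ⟨A', rfl⟩
  · have target_m : ((safeArch1 𝒜 Cs).conTy (.m α' A' βf)).target_s14 = .cert α' A' :=
      Ty.target_arrows_s14 _ _
    cases target_m.symm.trans hA
  · cases hA
    rfl

theorem eq_pi_of_mem_cell_of_not_canCompute {α : Ag} {A : σ} (hA : ¬ CanCompute 𝒜 α A)
    {β : Ag ⊕ Ag} (hβ : β ∈ cell α) {c : SCon Ag σ κ} (hc : c ∈ (safeArch1 𝒜 Cs).H β)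
    (hT : ∃ Ts : List (Ty (SAtom Ag σ)),
      (safeArch1 𝒜 Cs).conTy c = Ty.arrows Ts (.atom (SAtom.base A))) :
    c = SCon.pi α A := by
  rcases hβ with rfl | rfl
  · exact absurd (canCompute_safeArch1_inl_iff.1 ⟨c, hc, hT⟩) hA
  · exact eq_pi_of_mem_H_inr hc (Ty.exists_eq_arrows_iff.1 hT)

end SafeArch1

theorem safeArch1_partition_general {Ag σ κ : Type}
    (𝒜 : Arch Ag σ κ) (Cs : Ag → σ → List σ) :
    (∀ x : Ag ⊕ Ag, ∃! α : Ag, x ∈ cell α) ∧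
    (∀ α : Ag, Sum.inl α ∈ cell α) ∧
    (∀ (β β' : Ag ⊕ Ag) (T : SAtom Ag σ), T ∈ (safeArch1 𝒜 Cs).M β β' →
      (¬ ∃ α : Ag, β ∈ cell α ∧ β' ∈ cell α) → ∃ γ B, T = SAtom.cert γ B) ∧
    (∀ (β : Ag ⊕ Ag) (α : Ag) (A : σ), SCon.pi α A ∈ (safeArch1 𝒜 Cs).H β → β ∈ cell α) ∧
    (∀ (α : Ag) (A : σ), ¬ CanCompute 𝒜 α A → ∀ β ∈ cell α, ∀ c ∈ (safeArch1 𝒜 Cs).H β,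
      (∃ Ts : List (Ty (SAtom Ag σ)),
        (safeArch1 𝒜 Cs).conTy c = Ty.arrows Ts (Ty.atom (SAtom.base A))) →
      c = SCon.pi α A) :=
  ⟨existsUnique_mem_cell,
    fun _ => inl_mem_cell_iff.2 rfl,
    fun _ _ _ hT => (same_cell_or_eq_cert_of_mem_M hT).resolve_left,
    fun _ _ _ => mem_cell_of_pi_mem_H,
    fun _ _ hA _ hβ _ => eq_pi_of_mem_cell_of_not_canCompute hA hβ⟩

/-- in the first algorithm's `Safe(𝒜, C)`, the family
`P_α = {α, I_α}` (i.e. `{Sum.inl α, Sum.inr α}`) is a partition of the agents of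
`Safe(𝒜, C)` satisfying: (1) `α ∈ P_α`; (2) any type sent between agents in
different sets of the partition has the form `C_γ(B)`; (3) if `β` initially
possesses `π_{αA}` then `β ∈ P_α`; (4) for every constraint `α ∋ A ⇒ B` in `C` with
`α` unable to compute terms of type `A` in `𝒜`, any constructor with target type `A`
possessed by an agent of `P_α` is `π_{αA}`. -/
theorem safeArch1_partition {Ag σ κ : Type}
    (𝒜 : Arch Ag σ κ) (Cs : Ag → σ → List σ) :
    (∀ x : Ag ⊕ Ag, ∃! α : Ag,
      x ∈ ({Sum.inl α, Sum.inr α} : Set (Ag ⊕ Ag))) ∧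
    (∀ α : Ag, Sum.inl α ∈ ({Sum.inl α, Sum.inr α} : Set (Ag ⊕ Ag))) ∧
    (∀ (β β' : Ag ⊕ Ag) (T : SAtom Ag σ), T ∈ (safeArch1 𝒜 Cs).M β β' →
      (¬ ∃ α : Ag, β ∈ ({Sum.inl α, Sum.inr α} : Set (Ag ⊕ Ag)) ∧
        β' ∈ ({Sum.inl α, Sum.inr α} : Set (Ag ⊕ Ag))) →
      ∃ γ B, T = SAtom.cert γ B) ∧
    (∀ (β : Ag ⊕ Ag) (α : Ag) (A : σ), SCon.pi α A ∈ (safeArch1 𝒜 Cs).H β →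
      β ∈ ({Sum.inl α, Sum.inr α} : Set (Ag ⊕ Ag))) ∧
    (∀ (α : Ag) (A B : σ), B ∈ Cs α A → ¬ CanCompute 𝒜 α A →
      ∀ β ∈ ({Sum.inl α, Sum.inr α} : Set (Ag ⊕ Ag)),
        ∀ c ∈ (safeArch1 𝒜 Cs).H β,
          (∃ Ts : List (Ty (SAtom Ag σ)),
            (safeArch1 𝒜 Cs).conTy c = Ty.arrows Ts (Ty.atom (SAtom.base A))) →
          c = SCon.pi α A) := by
  obtain ⟨partition, mem, send, pi_mem, eq_pi⟩ := safeArch1_partition_general 𝒜 Cs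
  exact ⟨partition, mem, send, pi_mem, fun α A _ _ => eq_pi α A⟩

end PrivacyByDesign
end
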